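/- arXiv:1304.6237 — 2 statements merged into one kernel-verified Lean document; each statement's English description precedes it below -/
import Mathlib

section
/- Let M be a positive integer, y ∈ ℝ^M, let Q ∈ ℝ^{M×M} and P ∈ ℝ^{T×T} be symmetric positive definite matrices, let g : ℝ^T → ℝ^K be a map, H ∈ ℝ^{M×K}, c > 0, μ ∈ ℝ^T, and set β = 1/(M+2). Define A(ϑ) = ‖y − c⁻¹ H g(ϑ)‖²_{Q⁻¹}, J(ϑ, s) = −((M+2)/2)·ln s − A(ϑ)/(2s) − (1/2)‖μ − ϑ‖²_{P⁻¹} for s > 0, and the concentrated cost V(ϑ) = (1/2)·ln A(ϑ) + (β/2)·‖μ − ϑ‖²_{P⁻¹}. Then for every ϑ with A(ϑ) > 0, sup_{s > 0} J(ϑ, s) = −(M+2)·V(ϑ) + ((M+2)/2)·(ln(M+2) − 1). Consequently, on any set S ⊆ ℝ^T on which A is strictly positive, ϑ* minimizes V over S if and only if ϑ* maximizes ϑ ↦ sup_{s>0} J(ϑ, s) over S. -/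
open Matrix

/-!
For fixed `ϑ`, put `t = A(ϑ)/(M+2)`. Up to the factor `(M+2)/2` and a term independent of `s`,
`J(ϑ, s)` is `-(log s + t/s)`, and `log u ≤ u - 1` at `u = t/s` shows that `log s + t/s` is smallest
at `s = t`. Substituting this `s` leaves an affine function of `V(ϑ)` with negative slope `-(M+2)`,
so minimizing `V` and maximizing the profile `ϑ ↦ sup_{s>0} J(ϑ, s)` are the same problem.
-/

lemma log_add_one_le_log_add_div {s t : ℝ} (hs : 0 < s) (ht : 0 < t) :
    Real.log t + 1 ≤ Real.log s + t / s := by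
  have h := Real.log_le_sub_one_of_pos (div_pos ht hs)
  rw [Real.log_div ht.ne' hs.ne'] at h
  linarith

lemma isGreatest_neg_mul_log_sub_div_sub {α b : ℝ} (hα : 0 < α) (hb : 0 < b) (r : ℝ) :
    IsGreatest {v : ℝ | ∃ s : ℝ, 0 < s ∧ v = -α * Real.log s - b / s - r}
      (-α * (Real.log (b / α) + 1) - r) := by
  have ht : 0 < b / α := div_pos hb hα
  have factor (s : ℝ) : -α * Real.log s - b / s = -α * (Real.log s + b / α / s) := by
    field_simp
    ring
  simp only [factor]
  refine ⟨⟨b / α, ht, by rw [div_self ht.ne']⟩, ?_⟩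
  rintro _ ⟨s, hs, rfl⟩
  exact sub_le_sub_right
    (mul_le_mul_of_nonpos_left (log_add_one_le_log_add_div hs ht) (neg_nonpos.mpr hα.le)) r

theorem stmt_1_general {Θ : Type*} {ν β : ℝ} (hν : 0 < ν) (hβ : β = 1 / ν) {A R V : Θ → ℝ}
    {J : Θ → ℝ → ℝ}
    (hJ : ∀ ϑ s, J ϑ s = -(ν / 2) * Real.log s - A ϑ / (2 * s) - (1 / 2) * R ϑ)
    (hV : ∀ ϑ, V ϑ = (1 / 2) * Real.log (A ϑ) + (β / 2) * R ϑ) :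
    (∀ ϑ, 0 < A ϑ →
      sSup {v : ℝ | ∃ s : ℝ, 0 < s ∧ v = J ϑ s} =
        -ν * V ϑ + (ν / 2) * (Real.log ν - 1)) ∧
    (∀ S : Set Θ, (∀ ϑ ∈ S, 0 < A ϑ) → ∀ ϑstar ∈ S,
      ((∀ ϑ ∈ S, V ϑstar ≤ V ϑ) ↔
        (∀ ϑ ∈ S,
          sSup {v : ℝ | ∃ s : ℝ, 0 < s ∧ v = J ϑ s} ≤
            sSup {v : ℝ | ∃ s : ℝ, 0 < s ∧ v = J ϑstar s}))) := by
  have sSup_eq (ϑ : Θ) (hϑ : 0 < A ϑ) :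
      sSup {v : ℝ | ∃ s : ℝ, 0 < s ∧ v = J ϑ s} =
        -ν * V ϑ + (ν / 2) * (Real.log ν - 1) := by
    have hmax := isGreatest_neg_mul_log_sub_div_sub (half_pos hν) (half_pos hϑ) (1 / 2 * R ϑ)
    simp only [hJ, hV, hβ, ← div_div]
    rw [hmax.csSup_eq, div_div_div_cancel_right₀ two_ne_zero, Real.log_div hϑ.ne' hν.ne']
    field_simp
    ring
  refine ⟨sSup_eq, fun S hS ϑstar hstar ↦ forall₂_congr fun ϑ hϑ ↦ ?_⟩
  rw [sSup_eq ϑ (hS ϑ hϑ), sSup_eq ϑstar (hS ϑstar hstar), add_le_add_iff_right,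
    mul_le_mul_left_of_neg (neg_neg_of_pos hν)]

/-- Concentration of the MAP cost: with `A(ϑ) = ‖y - c⁻¹ H g(ϑ)‖²_{Q⁻¹}`,
`J(ϑ, s) = -((M+2)/2)·ln s - A(ϑ)/(2s) - (1/2)‖μ - ϑ‖²_{P⁻¹}` and
`V(ϑ) = (1/2)·ln A(ϑ) + (β/2)·‖μ - ϑ‖²_{P⁻¹}` with `β = 1/(M+2)`, one has
`sup_{s>0} J(ϑ, s) = -(M+2)·V(ϑ) + ((M+2)/2)(ln(M+2) - 1)` whenever `A(ϑ) > 0`;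
hence minimizing `V` over a set where `A > 0` is equivalent to maximizing
`ϑ ↦ sup_{s>0} J(ϑ, s)` over that set. -/
theorem stmt_1 (M T K : ℕ) (hM : 0 < M) (hT : 0 < T) (hK : 0 < K)
    (y : Fin M → ℝ)
    (Q : Matrix (Fin M) (Fin M) ℝ) (hQsymm : Q.IsSymm) (hQ : Q.PosDef)
    (P : Matrix (Fin T) (Fin T) ℝ) (hPsymm : P.IsSymm) (hP : P.PosDef)
    (g : (Fin T → ℝ) → (Fin K → ℝ)) (H : Matrix (Fin M) (Fin K) ℝ)
    (c : ℝ) (hc : 0 < c) (μ : Fin T → ℝ)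
    (β : ℝ) (hβ : β = 1 / (M + 2))
    (A : (Fin T → ℝ) → ℝ)
    (hA : ∀ ϑ, A ϑ =
      (y - c⁻¹ • (H *ᵥ g ϑ)) ⬝ᵥ (Q⁻¹ *ᵥ (y - c⁻¹ • (H *ᵥ g ϑ))))
    (J : (Fin T → ℝ) → ℝ → ℝ)
    (hJ : ∀ ϑ s, J ϑ s =
      -((M + 2 : ℝ) / 2) * Real.log s - A ϑ / (2 * s)
        - (1 / 2) * ((μ - ϑ) ⬝ᵥ (P⁻¹ *ᵥ (μ - ϑ))))
    (V : (Fin T → ℝ) → ℝ)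
    (hV : ∀ ϑ, V ϑ =
      (1 / 2) * Real.log (A ϑ) + (β / 2) * ((μ - ϑ) ⬝ᵥ (P⁻¹ *ᵥ (μ - ϑ)))) :
    (∀ ϑ : Fin T → ℝ, 0 < A ϑ →
      sSup {v : ℝ | ∃ s : ℝ, 0 < s ∧ v = J ϑ s} =
        -(M + 2 : ℝ) * V ϑ + ((M + 2 : ℝ) / 2) * (Real.log (M + 2) - 1)) ∧
    (∀ S : Set (Fin T → ℝ), (∀ ϑ ∈ S, 0 < A ϑ) →
      ∀ ϑstar ∈ S,
        ((∀ ϑ ∈ S, V ϑstar ≤ V ϑ) ↔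
          (∀ ϑ ∈ S,
            sSup {v : ℝ | ∃ s : ℝ, 0 < s ∧ v = J ϑ s} ≤
              sSup {v : ℝ | ∃ s : ℝ, 0 < s ∧ v = J ϑstar s}))) := by
  exact stmt_1_general (by positivity) hβ hJ hV
end

section
/- Let M and T be positive integers, ỹ ∈ ℝ^M, G ∈ ℝ^{M×T}, μ̃ ∈ ℝ^T, β > 0, and let Q ∈ ℝ^{M×M} and P ∈ ℝ^{T×T} be symmetric positive definite. Define V_ℓ(x) = (1/2)·ln ‖ỹ − G x‖²_{Q⁻¹} + (β/2)·‖μ̃ − x‖²_{P⁻¹} and α(x) = 1/‖ỹ − G x‖²_{Q⁻¹}. Then for every x ∈ ℝ^T with ỹ − G x ≠ 0, the gradient of V_ℓ vanishes at x if and only if x = (α(x)·Gᵀ Q⁻¹ G + β·P⁻¹)⁻¹ (α(x)·Gᵀ Q⁻¹ ỹ + β·P⁻¹ μ̃); that is, the stationary points of the linearized concentrated cost are exactly the fixed points of the proposed fixed-point iteration map. -/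
open Matrix

/-!
Writing `r = c - G x` and `s = ‖r‖²_W`, the chain rule gives
`∇ (½ log ‖c - G z‖²_W) = -s⁻¹ Gᵀ W r`, so the weight `s⁻¹` enters the gradient exactly as if it
were constant. The total gradient is therefore the residual of the normal equations of a weighted
least-squares problem, whose matrix is positive definite and can be inverted.
-/

section Gradient

open scoped InnerProductSpace

variable {E F : Type*} [NormedAddCommGroup E] [InnerProductSpace ℝ E] [CompleteSpace E]
  [NormedAddCommGroup F] [InnerProductSpace ℝ F]

theorem hasGradientAt_add {f g : E → ℝ} {f' g' x : E} (hf : HasGradientAt f f' x)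
    (hg : HasGradientAt g g' x) : HasGradientAt (fun z => f z + g z) (f' + g') x := by
  simpa only [hasGradientAt_iff_hasFDerivAt, map_add] using hf.hasFDerivAt.fun_add hg.hasFDerivAt

theorem hasGradientAt_const_mul {f : E → ℝ} {f' x : E} (a : ℝ) (hf : HasGradientAt f f' x) :
    HasGradientAt (fun z => a * f z) (a • f') x := by
  simpa only [hasGradientAt_iff_hasFDerivAt, map_smul] using hf.hasFDerivAt.const_mul a

theorem hasGradientAt_log {f : E → ℝ} {f' x : E} (hf : HasGradientAt f f' x) (hx : f x ≠ 0) :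
    HasGradientAt (fun z => Real.log (f z)) ((f x)⁻¹ • f') x := by
  simpa only [hasGradientAt_iff_hasFDerivAt, map_smul] using hf.hasFDerivAt.log hx

theorem hasGradientAt_inner_sub_map [CompleteSpace F] (A : E →L[ℝ] F) {W : F →L[ℝ] F}
    (hW : W.IsSymmetric) (c : F) (x : E) :
    HasGradientAt (fun z => ⟪c - A z, W (c - A z)⟫_ℝ)
      ((-2 : ℝ) • A.adjoint (W (c - A x))) x := by
  have residual : HasFDerivAt (fun z => c - A z) (-A) x := A.hasFDerivAt.const_sub c
  rw [hasGradientAt_iff_hasFDerivAt]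
  refine (residual.inner ℝ (W.hasFDerivAt.comp x residual)).congr_fderiv ?_
  ext h
  have symmetric : ⟪c - A x, W (A h)⟫_ℝ = ⟪W (c - A x), A h⟫_ℝ := (hW _ _).symm
  calc
    _ = ⟪c - A x, W (-A h)⟫_ℝ + ⟪-A h, W (c - A x)⟫_ℝ := rfl
    _ = -2 * ⟪W (c - A x), A h⟫_ℝ := by
      rw [map_neg, inner_neg_right, inner_neg_left, symmetric, real_inner_comm]
      ring
    _ = _ := by
      rw [InnerProductSpace.toDual_apply_apply, real_inner_smul_left,
        ContinuousLinearMap.adjoint_inner_left]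

end Gradient

theorem eq_inv_mulVec_iff {n R : Type*} [Fintype n] [DecidableEq n] [CommRing R]
    {N : Matrix n n R} (hN : IsUnit N) {v b : n → R} : v = N⁻¹ *ᵥ b ↔ N *ᵥ v = b := by
  have hdet : IsUnit N.det := (isUnit_iff_isUnit_det N).mp hN
  constructor
  · rintro rfl
    rw [mulVec_mulVec, mul_nonsing_inv N hdet, one_mulVec]
  · rintro rfl
    rw [mulVec_mulVec, nonsing_inv_mul N hdet, one_mulVec]

section LinearizedCost

variable {m n : Type*} [Fintype m]

/-- The squared weighted norm `‖r‖²_W = rᵀ W r`. -/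
def weightedSqNorm (W : Matrix m m ℝ) (r : m → ℝ) : ℝ :=
  r ⬝ᵥ (W *ᵥ r)

/-- The matrix `α Gᵀ W G + β V` of the normal equations of the least-squares problem that results
from holding the weight `α` fixed. -/
def normalMatrix (α : ℝ) (G : Matrix m n ℝ) (W : Matrix m m ℝ) (β : ℝ) (V : Matrix n n ℝ) :
    Matrix n n ℝ :=
  α • (Gᵀ * W * G) + β • V

theorem posDef_normalMatrix [Finite n] {α β : ℝ} (hα : 0 ≤ α) (hβ : 0 < β) (G : Matrix m n ℝ)
    {W : Matrix m m ℝ} (hW : W.PosSemidef) {V : Matrix n n ℝ} (hV : V.PosDef) :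
    (normalMatrix α G W β V).PosDef :=
  PosDef.posSemidef_add ((hW.conjTranspose_mul_mul_same G).smul hα) (hV.smul hβ)

variable [Fintype n]

/-- The right-hand side `α Gᵀ W c + β V μ` of the normal equations with matrix `normalMatrix`. -/
def normalVector (α : ℝ) (c : m → ℝ) (G : Matrix m n ℝ) (W : Matrix m m ℝ) (μ : n → ℝ) (β : ℝ)
    (V : Matrix n n ℝ) : n → ℝ :=
  α • (Gᵀ *ᵥ (W *ᵥ c)) + β • (V *ᵥ μ)

theorem normalMatrix_mulVec_sub_normalVector (α : ℝ) (c : m → ℝ) (G : Matrix m n ℝ)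
    (W : Matrix m m ℝ) (μ : n → ℝ) (β : ℝ) (V : Matrix n n ℝ) (v : n → ℝ) :
    normalMatrix α G W β V *ᵥ v - normalVector α c G W μ β V =
      -(α • (Gᵀ *ᵥ (W *ᵥ (c - G *ᵥ v))) + β • (V *ᵥ (μ - v))) := by
  simp only [normalMatrix, normalVector, add_mulVec, smul_mulVec, mulVec_sub, mulVec_mulVec,
    smul_sub, Matrix.mul_assoc]
  abel

theorem hasGradientAt_weightedSqNorm_sub_mulVec (c : m → ℝ) (G : Matrix m n ℝ)
    {W : Matrix m m ℝ} (hW : W.IsHermitian) (x : EuclideanSpace ℝ n) :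
    HasGradientAt (fun z : EuclideanSpace ℝ n => weightedSqNorm W (c - G *ᵥ z.ofLp))
      (WithLp.toLp 2 ((-2 : ℝ) • (Gᵀ *ᵥ (W *ᵥ (c - G *ᵥ x.ofLp))))) x := by
  classical
  convert hasGradientAt_inner_sub_map G.toEuclideanLin.toContinuousLinearMap
    (W := W.toEuclideanLin.toContinuousLinearMap) (isSymmetric_toEuclideanLin_iff.mpr hW)
    (WithLp.toLp 2 c) x using 1
  · ext z
    exact dotProduct_comm _ _
  · rw [← LinearMap.adjoint_toContinuousLinearMap, ← toEuclideanLin_conjTranspose_eq_adjoint,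
      conjTranspose_eq_transpose_of_trivial]
    rfl

/-- The linearized concentrated cost `½ log ‖c - G z‖²_W + (β / 2) ‖μ - z‖²_V`, with the weights
`W = Q⁻¹` of the measurement and `V = P⁻¹` of the prior as parameters. -/
noncomputable def linearizedCost (c : m → ℝ) (G : Matrix m n ℝ) (W : Matrix m m ℝ)
    (μ : n → ℝ) (β : ℝ) (V : Matrix n n ℝ) (z : EuclideanSpace ℝ n) : ℝ :=
  (1 / 2) * Real.log (weightedSqNorm W (c - G *ᵥ z.ofLp)) +
    (β / 2) * weightedSqNorm V (μ - z.ofLp)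

/-- The weight `α(v) = 1 / ‖c - G v‖²_W` of the fixed-point iteration; it has the junk value `0`
where the norm vanishes. -/
noncomputable def residualWeight (c : m → ℝ) (G : Matrix m n ℝ) (W : Matrix m m ℝ)
    (v : n → ℝ) : ℝ :=
  1 / weightedSqNorm W (c - G *ᵥ v)

/-- The map of the fixed-point iteration: it sends `v` to the solution of the normal equations
with the weight held at `α(v)`. -/
noncomputable def fixedPointMap [DecidableEq n] (c : m → ℝ) (G : Matrix m n ℝ) (W : Matrix m m ℝ)
    (μ : n → ℝ) (β : ℝ) (V : Matrix n n ℝ) (v : n → ℝ) : n → ℝ :=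
  (normalMatrix (residualWeight c G W v) G W β V)⁻¹ *ᵥ
    normalVector (residualWeight c G W v) c G W μ β V

theorem hasGradientAt_linearizedCost (c : m → ℝ) (G : Matrix m n ℝ) {W : Matrix m m ℝ}
    (hW : W.IsHermitian) (μ : n → ℝ) (β : ℝ) {V : Matrix n n ℝ} (hV : V.IsHermitian)
    {x : EuclideanSpace ℝ n} (hx : weightedSqNorm W (c - G *ᵥ x.ofLp) ≠ 0) :
    HasGradientAt (linearizedCost c G W μ β V)
      (WithLp.toLp 2
        (normalMatrix (residualWeight c G W x.ofLp) G W β V *ᵥ x.ofLp -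
          normalVector (residualWeight c G W x.ofLp) c G W μ β V)) x := by
  classical
  have misfit := hasGradientAt_const_mul (1 / 2)
    (hasGradientAt_log (hasGradientAt_weightedSqNorm_sub_mulVec c G hW x) hx)
  have prior := hasGradientAt_const_mul (β / 2)
    (hasGradientAt_weightedSqNorm_sub_mulVec μ (1 : Matrix n n ℝ) hV x)
  simp only [one_mulVec, transpose_one] at prior
  convert hasGradientAt_add misfit prior using 1
  · rfl
  · rw [normalMatrix_mulVec_sub_normalVector, residualWeight]
    simp only [← WithLp.toLp_smul, ← WithLp.toLp_add]
    congr 1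
    module

theorem stmt_6_general [DecidableEq n] {c : m → ℝ} {G : Matrix m n ℝ} {W : Matrix m m ℝ}
    (hW : W.PosSemidef) {μ : n → ℝ} {β : ℝ} (hβ : 0 < β) {V : Matrix n n ℝ} (hV : V.PosDef)
    {x : EuclideanSpace ℝ n} (hx : weightedSqNorm W (c - G *ᵥ x.ofLp) ≠ 0) :
    gradient (linearizedCost c G W μ β V) x = 0 ↔
      x.ofLp = fixedPointMap c G W μ β V x.ofLp := by
  have weight_nonneg : 0 ≤ residualWeight c G W x.ofLp :=
    one_div_nonneg.mpr (hW.dotProduct_mulVec_nonneg _)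
  have isUnit_normalMatrix := (posDef_normalMatrix weight_nonneg hβ G hW hV).isUnit
  rw [(hasGradientAt_linearizedCost c G hW.isHermitian μ β hV.isHermitian hx).gradient,
    WithLp.toLp_eq_zero, sub_eq_zero, fixedPointMap, eq_inv_mulVec_iff isUnit_normalMatrix]

end LinearizedCost

/-- For the linearized concentrated cost
`V_ℓ(x) = (1/2)·ln ‖ỹ - Gx‖²_{Q⁻¹} + (β/2)·‖μ̃ - x‖²_{P⁻¹}` and
`α(x) = 1/‖ỹ - Gx‖²_{Q⁻¹}`, at every `x` with `ỹ - Gx ≠ 0` the gradient of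
`V_ℓ` vanishes iff `x = (α(x)·Gᵀ Q⁻¹ G + β·P⁻¹)⁻¹ (α(x)·Gᵀ Q⁻¹ ỹ + β·P⁻¹ μ̃)`:
the stationary points are exactly the fixed points of the fixed-point map. -/
theorem stmt_6 (M T : ℕ) (hM : 0 < M) (hT : 0 < T)
    (ytil : Fin M → ℝ) (G : Matrix (Fin M) (Fin T) ℝ) (μtil : Fin T → ℝ)
    (β : ℝ) (hβ : 0 < β)
    (Q : Matrix (Fin M) (Fin M) ℝ) (hQsymm : Q.IsSymm) (hQ : Q.PosDef)
    (P : Matrix (Fin T) (Fin T) ℝ) (hPsymm : P.IsSymm) (hP : P.PosDef)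
    (x : EuclideanSpace ℝ (Fin T))
    (hx : ytil - G *ᵥ (WithLp.equiv 2 (Fin T → ℝ) x) ≠ 0) :
    gradient
      (fun z : EuclideanSpace ℝ (Fin T) =>
        (1 / 2) * Real.log ((ytil - G *ᵥ (WithLp.equiv 2 (Fin T → ℝ) z)) ⬝ᵥ
            (Q⁻¹ *ᵥ (ytil - G *ᵥ (WithLp.equiv 2 (Fin T → ℝ) z))))
          + (β / 2) * ((μtil - WithLp.equiv 2 (Fin T → ℝ) z) ⬝ᵥ
            (P⁻¹ *ᵥ (μtil - WithLp.equiv 2 (Fin T → ℝ) z)))) x = 0 ↔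
    WithLp.equiv 2 (Fin T → ℝ) x =
      ((1 / ((ytil - G *ᵥ (WithLp.equiv 2 (Fin T → ℝ) x)) ⬝ᵥ
          (Q⁻¹ *ᵥ (ytil - G *ᵥ (WithLp.equiv 2 (Fin T → ℝ) x))))) •
            (Gᵀ * Q⁻¹ * G) + β • P⁻¹)⁻¹ *ᵥ
        ((1 / ((ytil - G *ᵥ (WithLp.equiv 2 (Fin T → ℝ) x)) ⬝ᵥ
          (Q⁻¹ *ᵥ (ytil - G *ᵥ (WithLp.equiv 2 (Fin T → ℝ) x))))) •
            (Gᵀ *ᵥ (Q⁻¹ *ᵥ ytil)) + β • (P⁻¹ *ᵥ μtil)) :=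
  stmt_6_general hQ.inv.posSemidef hβ hP.inv (hQ.inv.dotProduct_mulVec_pos hx).ne'
end
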